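/- Let f : ℕ → ℕ be a nondecreasing function with f(n) = Θ(n^{3/2}), i.e., there exist real constants 0 < c₁ ≤ c₂ and N₀ ∈ ℕ such that c₁ n^{3/2} ≤ f(n) ≤ c₂ n^{3/2} for all n ≥ N₀. For every n ≥ 0, let S_n be the grid graph on vertex set [-f(n), f(n)]² ⊆ ℤ². Then there exists a valid activator sequence v = (v_n)_{n≥0} with lower burning density δ̲(S, v) > 0. -/

import Mathlib

/-!
Whether an activation is admissible is not a real constraint: if a prescribed target is already
burned, it may be skipped (play `•`) without changing the burned sets. So it suffices to prescribe
targets `p t`, and the burned set at time `n` is the set obtained by burning every target lying in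
the current grid (`burnSet_activator`).

The targets are organised in dyadic blocks. In the block of times `m ≤ t < 2 m`, `m = 2 ^ k`, the
targets run through the `s ^ 2` lattice points `(m a, m b)` with `0 ≤ a, b < s`, where
`s = min (√m) (f m / m)`: there is time for all of them as `s ^ 2 ≤ m`, and they lie in
`[-f m, f m]²` as `s m ≤ f m`. At every time `n ≥ 4 m` each of them has burned for at least `2 m`
steps, hence has burned the square of side `m` of which it is the lower left corner, so all of
`[0, s m)²` is burned (`mem_targetSet`). Since `s` is at least a constant times `√m`, this is at
least a constant times `m ^ 3` points. For `4 m ≤ n < 8 m` the whole grid has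
`(2 f n + 1) ^ 2 = O(m ^ 3)` points, so the density is bounded below.
-/

open Filter Topology

namespace Burning

/-- Points of the `d`-dimensional integer lattice. -/
abbrev Pt (d : ℕ) := Fin d → ℤ

/-- The `L1`-distance between two lattice points. -/
def dist1 {d : ℕ} (x y : Pt d) : ℤ := ∑ i, |x i - y i|

/-- The `L1`-norm of a lattice point. -/
def norm1 {d : ℕ} (x : Pt d) : ℤ := ∑ i, |x i|

/-- The closed neighbourhood of the set `B` in the grid graph on the vertex set `Vn`
(two vertices adjacent iff at `L1`-distance `1`). -/
def nbhd {d : ℕ} (Vn : Set (Pt d)) (B : Set (Pt d)) : Set (Pt d) :=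
  B ∪ {x | x ∈ Vn ∧ ∃ b ∈ B, dist1 x b = 1}

/-- The burned sets of the activator sequence `v` in the sequence of grid graphs on the
vertex sets `V n`; `v n = none` means no vertex is activated at time `n` (the symbol `•`). -/
def burnSet {d : ℕ} (V : ℕ → Set (Pt d)) (v : ℕ → Option (Pt d)) : ℕ → Set (Pt d)
  | 0 => (v 0).elim ∅ (fun x => {x})
  | n + 1 => nbhd (V (n + 1)) (burnSet V v n) ∪ (v (n + 1)).elim ∅ (fun x => {x})

/-- `v` is an activator sequence for the vertex sets `V`: every activated vertex is a
vertex of the current graph. -/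
def IsActivator {d : ℕ} (V : ℕ → Set (Pt d)) (v : ℕ → Option (Pt d)) : Prop :=
  ∀ n x, v n = some x → x ∈ V n

/-- `v` is a valid activator sequence: each newly activated vertex lies in the current
vertex set and is not already burned at the current step. -/
def IsValid {d : ℕ} (V : ℕ → Set (Pt d)) (v : ℕ → Option (Pt d)) : Prop :=
  ∀ n x, v (n + 1) = some x →
    x ∈ V (n + 1) ∧ x ∉ nbhd (V (n + 1)) (burnSet V v n)

/-- The proportion of burned vertices at time `n`. -/
noncomputable def densitySeq {d : ℕ} (V : ℕ → Set (Pt d)) (v : ℕ → Option (Pt d))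
    (n : ℕ) : ℝ :=
  ((burnSet V v n).ncard : ℝ) / ((V n).ncard : ℝ)

/-- The closed `L1`-ball of radius `r` centred at `P`. -/
def ball1 {d : ℕ} (P : Pt d) (r : ℤ) : Set (Pt d) := {x | norm1 (x - P) ≤ r}

/-- The `L1`-sphere of radius `r` centred at `P`. -/
def sphere1 {d : ℕ} (P : Pt d) (r : ℤ) : Set (Pt d) := {x | norm1 (x - P) = r}

/-- The square grid `[-a, a]² ⊆ ℤ²`. -/
def sqGrid (a : ℤ) : Set (Pt 2) := {x | ∀ i, |x i| ≤ a}

/-- The cube grid `[-a, a]^d ⊆ ℤ^d`. -/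
def cubeGrid (d : ℕ) (a : ℤ) : Set (Pt d) := {x | ∀ i, |x i| ≤ a}

/-- The quadrant grid `[0, a]² ⊆ ℤ²`. -/
def quadGrid (a : ℤ) : Set (Pt 2) := {x | ∀ i, 0 ≤ x i ∧ x i ≤ a}

end Burning

namespace Burning

/-! ### Prescribed targets -/

/-- The burned sets obtained by burning, from time `1` on, every target `p n` that lies in the
current grid, whether or not it is already burned. -/
def targetSet (V : ℕ → Set (Pt 2)) (p : ℕ → Pt 2) : ℕ → Set (Pt 2)
  | 0 => ∅
  | n + 1 => nbhd (V (n + 1)) (targetSet V p n) ∪ {x | x = p (n + 1) ∧ x ∈ V (n + 1)}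

open Classical in
/-- The activator sequence that plays the target `p n` when this is a legal move and `•`
otherwise. -/
noncomputable def activator (V : ℕ → Set (Pt 2)) (p : ℕ → Pt 2) : ℕ → Option (Pt 2)
  | 0 => none
  | n + 1 =>
    if p (n + 1) ∈ V (n + 1) ∧ p (n + 1) ∉ nbhd (V (n + 1)) (targetSet V p n)
    then some (p (n + 1)) else none

/-- Skipping the targets that are already burned does not change the burned sets. -/
lemma burnSet_activator (V : ℕ → Set (Pt 2)) (p : ℕ → Pt 2) (n : ℕ) :
    burnSet V (activator V p) n = targetSet V p n := by
  induction n with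
  | zero => simp [burnSet, targetSet, activator]
  | succ n ih =>
    rw [burnSet, targetSet, ih]
    ext x
    simp only [activator, Set.mem_union, Set.mem_ofPred_eq]
    split_ifs with h
    · simp only [Option.elim_some, Set.mem_singleton_iff]
      constructor
      · rintro (hx | rfl)
        · exact Or.inl hx
        · exact Or.inr ⟨rfl, h.1⟩
      · rintro (hx | hx)
        · exact Or.inl hx
        · exact Or.inr hx.1
    · simp only [Option.elim_none, Set.mem_empty_iff_false, or_false]
      constructor
      · exact Or.inl
      · rintro (hx | ⟨rfl, hx⟩)
        · exact hx
        · by_contra hc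
          exact h ⟨hx, hc⟩

lemma activator_succ_eq_some {V : ℕ → Set (Pt 2)} {p : ℕ → Pt 2} {n : ℕ} {x : Pt 2}
    (h : activator V p (n + 1) = some x) :
    x ∈ V (n + 1) ∧ x ∉ nbhd (V (n + 1)) (targetSet V p n) := by
  rw [activator] at h
  split_ifs at h with hc
  cases h
  exact hc

lemma isActivator_activator (V : ℕ → Set (Pt 2)) (p : ℕ → Pt 2) :
    IsActivator V (activator V p) := by
  intro n x h
  cases n with
  | zero => simp [activator] at h
  | succ n => exact (activator_succ_eq_some h).1

lemma isValid_activator (V : ℕ → Set (Pt 2)) (p : ℕ → Pt 2) :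
    IsValid V (activator V p) := by
  intro n x h
  rw [burnSet_activator]
  exact activator_succ_eq_some h

lemma targetSet_subset {V : ℕ → Set (Pt 2)} (hV : Monotone V) (p : ℕ → Pt 2) (n : ℕ) :
    targetSet V p n ⊆ V n := by
  induction n with
  | zero => simp [targetSet]
  | succ n ih =>
    rintro x ((hx | hx) | hx)
    · exact hV n.le_succ (ih hx)
    · exact hx.1
    · exact hx.2

lemma targetSet_mono (V : ℕ → Set (Pt 2)) (p : ℕ → Pt 2) : Monotone (targetSet V p) :=
  monotone_nat_of_le_succ fun _ _ hx => Or.inl (Or.inl hx)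

/-! ### Spread of the fire -/

lemma targetSet_step {V : ℕ → Set (Pt 2)} {p : ℕ → Pt 2} {n : ℕ} {x y : Pt 2}
    (hx : x ∈ targetSet V p n) (hy : y ∈ V (n + 1)) (hd : dist1 y x = 1) :
    y ∈ targetSet V p (n + 1) :=
  Or.inl (Or.inr ⟨hy, x, hx, hd⟩)

lemma mem_sqGrid_mk {a b N : ℤ} (ha : 0 ≤ a) (hb : 0 ≤ b) (haN : a ≤ N) (hbN : b ≤ N) :
    (![a, b] : Pt 2) ∈ sqGrid N := by
  intro i
  fin_cases i
  · simpa [abs_of_nonneg ha] using haN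
  · simpa [abs_of_nonneg hb] using hbN

/-- The fire spreads from `(a, b)` to `(a + u, b + w)` within `u + w` steps: first along the
horizontal, then along the vertical segment, both of which lie in the grid. -/
lemma targetSet_spread {f : ℕ → ℕ} (hf : Monotone f) {V : ℕ → Set (Pt 2)}
    (hV : ∀ n, V n = sqGrid (f n)) {p : ℕ → Pt 2} {t : ℕ} {a b : ℕ}
    (h : (![(a : ℤ), (b : ℤ)] : Pt 2) ∈ targetSet V p t) (u w : ℕ)
    (hu : a + u ≤ f t) (hw : b + w ≤ f t) :
    (![((a + u : ℕ) : ℤ), ((b + w : ℕ) : ℤ)] : Pt 2) ∈ targetSet V p (t + u + w) := by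
  induction w with
  | zero =>
    induction u with
    | zero => simpa using h
    | succ u ih =>
      have := hf (show t ≤ t + u + 1 by omega)
      refine targetSet_step (n := t + u) (ih (by omega)) ?_ (by simp [dist1])
      rw [hV]
      apply mem_sqGrid_mk <;> omega
  | succ w ih =>
    have := hf (show t ≤ t + u + w + 1 by omega)
    refine targetSet_step (n := t + u + w) (ih (by omega)) ?_ (by simp [dist1])
    rw [hV]
    apply mem_sqGrid_mk <;> omega

/-! ### The dyadic blocks of targets -/

/-- The number of targets per side in the block of times `m ≤ t < 2 m`. -/
def side (f : ℕ → ℕ) (m : ℕ) : ℕ := min (Nat.sqrt m) (f m / m)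

/-- The target at time `t`. With `m` the largest power of two that is at most `t` and `s = side f m`, it is
the lattice point `(m a, m b)`, where `a` and `b` are the digits of `t - m` in base `s`. When `s = 0` or `t - m ≥ s ^ 2` the value is
irrelevant: such a target may be burned or, if it lies outside the grid, ignored. -/
def target (f : ℕ → ℕ) (t : ℕ) : Pt 2 :=
  ![((2 ^ Nat.log 2 t * ((t - 2 ^ Nat.log 2 t) / side f (2 ^ Nat.log 2 t)) : ℕ) : ℤ),
    ((2 ^ Nat.log 2 t * ((t - 2 ^ Nat.log 2 t) % side f (2 ^ Nat.log 2 t)) : ℕ) : ℤ)]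

lemma side_sq_le (f : ℕ → ℕ) (m : ℕ) : side f m * side f m ≤ m :=
  (Nat.mul_self_le_mul_self (min_le_left _ _)).trans (Nat.sqrt_le m)

lemma side_mul_le (f : ℕ → ℕ) (m : ℕ) : side f m * m ≤ f m :=
  (Nat.mul_le_mul_right m (min_le_right _ _)).trans (Nat.div_mul_le_self _ _)

/-- The square `[0, s m)²` is burned at time `4 m` and later, for `m = 2 ^ k` and
`s = side f m`. -/
lemma mem_targetSet {f : ℕ → ℕ} (hf : Monotone f) {V : ℕ → Set (Pt 2)}
    (hV : ∀ n, V n = sqGrid (f n)) (k n x y : ℕ) (hn : 4 * 2 ^ k ≤ n)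
    (hx : x < side f (2 ^ k) * 2 ^ k) (hy : y < side f (2 ^ k) * 2 ^ k) :
    (![(x : ℤ), (y : ℤ)] : Pt 2) ∈ targetSet V (target f) n := by
  have hsq := side_sq_le f (2 ^ k)
  have hsm := side_mul_le f (2 ^ k)
  have hpos : 0 < 2 ^ k := by positivity
  have hlog : ∀ i < 2 ^ k, Nat.log 2 (2 ^ k + i) = k := fun i hi =>
    Nat.log_eq_of_pow_le_of_lt_pow (by omega) (by rw [pow_succ]; omega)
  generalize hm : 2 ^ k = m at *
  generalize hs : side f m = s at *
  have ha : x / m < s := Nat.div_lt_of_lt_mul (by rwa [mul_comm])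
  have hb : y / m < s := Nat.div_lt_of_lt_mul (by rwa [mul_comm])
  have hxm := Nat.div_add_mod x m
  have hym := Nat.div_add_mod y m
  have hxr := Nat.mod_lt x hpos
  have hyr := Nat.mod_lt y hpos
  generalize x / m = a at *
  generalize y / m = b at *
  generalize x % m = u at *
  generalize y % m = w at *
  -- The time in the block at which the corner `(m a, m b)` is the target.
  have hi : s * a + b < m := by nlinarith
  have ht : target f (m + (s * a + b)) = ![((m * a : ℕ) : ℤ), ((m * b : ℕ) : ℤ)] := by
    have hd : (s * a + b) / s = a := by
      rw [Nat.mul_add_div (by omega), Nat.div_eq_of_lt hb, add_zero]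
    have hmod : (s * a + b) % s = b := by
      rw [Nat.mul_add_mod, Nat.mod_eq_of_lt hb]
    simp only [target, hlog _ hi, hm, hs, Nat.add_sub_cancel_left, hd, hmod]
  generalize hT : s * a + b = i at *
  have hft := hf (show m ≤ m + i by omega)
  have hburn : (![((m * a : ℕ) : ℤ), ((m * b : ℕ) : ℤ)] : Pt 2)
      ∈ targetSet V (target f) (m + i) := by
    obtain ⟨j, hj⟩ : ∃ j, m + i = j + 1 := ⟨m + i - 1, by omega⟩
    rw [hj] at ht hft ⊢
    refine Or.inr ⟨ht.symm, ?_⟩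
    rw [hV]
    apply mem_sqGrid_mk <;> omega
  have h := targetSet_spread hf hV hburn u w (by omega) (by omega)
  rw [hxm, hym] at h
  exact targetSet_mono V _ (by omega) h

/-! ### Counting points and size estimates -/

lemma sqGrid_eq (a : ℕ) :
    sqGrid (a : ℤ) = ↑(Fintype.piFinset fun _ : Fin 2 => Finset.Icc (-(a : ℤ)) a) := by
  ext x
  simp only [sqGrid, abs_le, Set.mem_ofPred_eq, Finset.mem_coe, Fintype.mem_piFinset,
    Finset.mem_Icc]

lemma sqGrid_finite (a : ℕ) : (sqGrid (a : ℤ)).Finite := by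
  rw [sqGrid_eq]
  exact Finset.finite_toSet _

lemma ncard_sqGrid (a : ℕ) : (sqGrid (a : ℤ)).ncard = (2 * a + 1) ^ 2 := by
  rw [sqGrid_eq, Set.ncard_coe_finset, Fintype.card_piFinset]
  simp only [Int.card_Icc, Finset.prod_const, Finset.card_univ, Fintype.card_fin]
  congr 1
  omega

lemma sq_le_ncard {B : Set (Pt 2)} (hB : B.Finite) (N : ℕ)
    (h : ∀ x y : ℕ, x < N → y < N → (![(x : ℤ), (y : ℤ)] : Pt 2) ∈ B) :
    N ^ 2 ≤ B.ncard := by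
  have hsub : (↑(Fintype.piFinset fun _ : Fin 2 => Finset.Ico (0 : ℤ) N) : Set (Pt 2)) ⊆ B := by
    intro x hx
    have hx : ∀ i, 0 ≤ x i ∧ x i < N := by simpa using hx
    have := h (x 0).toNat (x 1).toNat (by have := hx 0; omega) (by have := hx 1; omega)
    rw [Int.toNat_of_nonneg (hx 0).1, Int.toNat_of_nonneg (hx 1).1] at this
    convert this using 1
    ext i
    fin_cases i <;> rfl
  have := Set.ncard_le_ncard hsub hB
  rw [Set.ncard_coe_finset, Fintype.card_piFinset] at this
  simpa using this

lemma rpow_three_halves (n : ℕ) : (n : ℝ) ^ ((3 : ℝ) / 2) = n * √n := by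
  rcases Nat.eq_zero_or_pos n with rfl | hn
  · norm_num
  · rw [Real.sqrt_eq_rpow, show (3 : ℝ) / 2 = 1 + 1 / 2 by norm_num,
      Real.rpow_add (by positivity), Real.rpow_one]

/-- For large `m`, both terms of the minimum defining `side f m` are at least a constant times
`√m`; rounding down costs at most a factor `2`. -/
lemma le_side {f : ℕ → ℕ} {c : ℝ} {m : ℕ} (hm : 0 < m)
    (hfm : c * (m * √m) ≤ f m) (h2 : 2 ≤ √m) (h2c : 2 ≤ c * √m) :
    min 1 c / 2 * √m ≤ side f m := by
  have hm' : (0 : ℝ) < m := by exact_mod_cast hm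
  have hr : 0 ≤ √(m : ℝ) := Real.sqrt_nonneg _
  have h1 : √(m : ℝ) ≤ Nat.sqrt m + 1 := by
    rw [Real.sqrt_le_left (by positivity)]
    have := Nat.lt_succ_sqrt' m
    exact_mod_cast this.le
  have h3 : c * √(m : ℝ) ≤ (f m / m : ℕ) + 1 := by
    have h4 : f m ≤ m * (f m / m + 1) := (Nat.lt_mul_div_succ (f m) hm).le
    have h5 : (f m : ℝ) ≤ m * ((f m / m : ℕ) + 1) := by exact_mod_cast h4
    refine le_of_mul_le_mul_left ?_ hm'
    linarith
  have h6 : min 1 c * √(m : ℝ) ≤ 1 * √m := mul_le_mul_of_nonneg_right (min_le_left _ _) hr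
  have h7 : min 1 c * √(m : ℝ) ≤ c * √m := mul_le_mul_of_nonneg_right (min_le_right _ _) hr
  rw [side, Nat.cast_min, le_min_iff]
  constructor <;> linarith

end Burning

open Burning in
/-- if `f : ℕ → ℕ` is nondecreasing with `f(n) = Θ(n^{3/2})`, then the
grids `S_n = [-f(n), f(n)]²` admit a valid activator sequence with positive lower
burning density. -/
theorem stmt8 (f : ℕ → ℕ) (hmono : Monotone f)
    (c₁ c₂ : ℝ) (hc₁ : 0 < c₁) (hc₁₂ : c₁ ≤ c₂) (N₀ : ℕ)
    (hf : ∀ n : ℕ, N₀ ≤ n →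
      c₁ * (n : ℝ) ^ ((3 : ℝ) / 2) ≤ (f n : ℝ) ∧
      (f n : ℝ) ≤ c₂ * (n : ℝ) ^ ((3 : ℝ) / 2))
    (V : ℕ → Set (Pt 2)) (hV : ∀ n : ℕ, V n = sqGrid (f n)) :
    ∃ v : ℕ → Option (Pt 2),
      IsActivator V v ∧ IsValid V v ∧
      0 < Filter.liminf (densitySeq V v) Filter.atTop := by
  have hVmono : Monotone V := by
    intro a b hab x hx
    rw [hV] at hx ⊢
    intro i
    have := hx i
    have hfab := hmono hab
    exact this.trans (by exact_mod_cast hfab)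
  refine ⟨activator V (target f), isActivator_activator _ _, isValid_activator _ _, ?_⟩
  have hc₂ : 0 < c₂ := hc₁.trans_le hc₁₂
  have hfin : ∀ n, (V n).Finite := fun n => by rw [hV]; exact sqGrid_finite _
  set κ : ℝ := min 1 c₁ / 2 with hκ
  have hκpos : 0 < κ := by positivity
  suffices h : ∀ᶠ n in atTop, κ ^ 2 / (4608 * c₂ ^ 2) ≤ densitySeq V (activator V (target f)) n by
    refine lt_of_lt_of_le (by positivity : 0 < κ ^ 2 / (4608 * c₂ ^ 2)) (le_liminf_of_le ?_ h)
    -- The densities are at most `1`, so the real-valued `liminf` is not a junk value.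
    refine (isBoundedUnder_of ⟨1, fun n => ?_⟩ : IsBoundedUnder (· ≤ ·) atTop _).isCoboundedUnder_ge
    rw [densitySeq, burnSet_activator]
    refine div_le_one_of_le₀ ?_ (by positivity)
    exact_mod_cast Set.ncard_le_ncard (targetSet_subset hVmono _ n) (hfin n)
  have hsqrt : Tendsto (fun m : ℕ => √(m : ℝ)) atTop atTop :=
    Real.tendsto_sqrt_atTop.comp tendsto_natCast_atTop_atTop
  obtain ⟨M, hM⟩ := eventually_atTop.1 ((hsqrt.eventually_ge_atTop 2).and
    ((hsqrt.eventually_ge_atTop (2 / c₁)).and (eventually_ge_atTop N₀)))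
  filter_upwards [eventually_ge_atTop (8 * M + 8 * N₀ + 8)] with n hn
  -- The block `m = 2 ^ k` with `4 m ≤ n < 8 m`.
  obtain ⟨k, hk4, hk8⟩ : ∃ k, 4 * 2 ^ k ≤ n ∧ n < 8 * 2 ^ k := by
    have h1 := Nat.pow_log_le_self 2 (show n ≠ 0 by omega)
    have h2 := Nat.lt_pow_succ_log_self (b := 2) (by norm_num) n
    have h3 : 2 ≤ Nat.log 2 n := Nat.le_log_of_pow_le (by norm_num) (by omega)
    obtain ⟨k, hk⟩ := Nat.exists_eq_add_of_le h3
    rw [hk] at h1 h2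
    refine ⟨k, ?_, ?_⟩
    · rw [pow_add] at h1; omega
    · rw [pow_succ, pow_add] at h2; omega
  have hburn := sq_le_ncard ((hfin n).subset (targetSet_subset hVmono (target f) n))
    (side f (2 ^ k) * 2 ^ k) (fun x y hx hy => mem_targetSet hmono hV k n x y hk4 hx hy)
  have hmpos : 0 < 2 ^ k := by positivity
  generalize 2 ^ k = m at *
  obtain ⟨h2, h2c, hN⟩ := hM m (by omega)
  have hmR : (0 : ℝ) < m := by exact_mod_cast hmpos
  have hnR : (0 : ℝ) < n := by
    have : 0 < n := by omega
    exact_mod_cast this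
  have hside := le_side hmpos (by rw [← rpow_three_halves]; exact (hf m hN).1) h2
    (by rwa [div_le_iff₀' hc₁] at h2c)
  rw [← hκ] at hside
  obtain ⟨hlow, hup⟩ := hf n (by omega)
  rw [rpow_three_halves] at hlow hup
  have hfpos : (1 : ℝ) ≤ f n := by
    have : (0 : ℝ) < f n := lt_of_lt_of_le (by positivity) hlow
    exact_mod_cast this
  have hnum : κ ^ 2 * (m : ℝ) ^ 3 ≤ ((targetSet V (target f) n).ncard : ℝ) := by
    calc κ ^ 2 * (m : ℝ) ^ 3 = (κ * √m) ^ 2 * (m : ℝ) ^ 2 := by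
          rw [mul_pow, Real.sq_sqrt hmR.le]; ring
      _ ≤ (side f m : ℝ) ^ 2 * (m : ℝ) ^ 2 := by gcongr
      _ = (((side f m * m) ^ 2 : ℕ) : ℝ) := by push_cast; ring
      _ ≤ _ := by exact_mod_cast hburn
  have hden : ((V n).ncard : ℝ) ≤ 4608 * c₂ ^ 2 * (m : ℝ) ^ 3 := by
    have hn8 : (n : ℝ) ≤ 8 * m := by exact_mod_cast hk8.le
    rw [hV, ncard_sqGrid]
    calc (((2 * f n + 1) ^ 2 : ℕ) : ℝ) = (2 * (f n : ℝ) + 1) ^ 2 := by push_cast; ring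
      _ ≤ (3 * (c₂ * (n * √n))) ^ 2 := by gcongr; linarith
      _ = 9 * c₂ ^ 2 * (n : ℝ) ^ 3 := by
          rw [mul_pow, mul_pow, mul_pow, Real.sq_sqrt hnR.le]; ring
      _ ≤ 9 * c₂ ^ 2 * (8 * m : ℝ) ^ 3 := by gcongr
      _ = _ := by ring
  have hVpos : (0 : ℝ) < (V n).ncard := by
    rw [hV, ncard_sqGrid]
    positivity
  rw [densitySeq, burnSet_activator, div_le_div_iff₀ (by positivity) hVpos]
  calc κ ^ 2 * ((V n).ncard : ℝ) ≤ κ ^ 2 * (4608 * c₂ ^ 2 * (m : ℝ) ^ 3) := by gcongr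
    _ = κ ^ 2 * (m : ℝ) ^ 3 * (4608 * c₂ ^ 2) := by ring
    _ ≤ _ := by gcongr
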